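/- arXiv:1307.2437 — 2 statements merged into one kernel-verified Lean document; each statement's English description precedes it below -/
import Mathlib

section
/- For every dimension d ≥ 1 and every constant c > 0, the set of functions {x ↦ p(x₁,…,x_d)·e^{-c|x|²} : p a complex polynomial in d variables} is dense in C₀(ℝᵈ, ℂ) with respect to the supremum norm, where |x|² = x₁² + ⋯ + x_d². -/
open MeasureTheory Filter

section Helpers

lemma exp_tail (t : ℝ) (ht : 0 ≤ t) (N : ℕ) :
    Real.exp t - ∑ m ∈ Finset.range N, t ^ m / (m.factorial : ℝ) ≤ (1 / 2) ^ N * Real.exp (2 * t) := by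
  have h1 : Tendsto (fun n => ∑ m ∈ Finset.range n, t ^ m / (m.factorial : ℝ)) atTop
      (nhds (Real.exp t)) := by
    have := NormedSpace.expSeries_div_hasSum_exp (𝔸 := ℝ) t
    rw [← Real.exp_eq_exp_ℝ] at this
    exact this.tendsto_sum_nat
  rw [sub_le_iff_le_add]
  refine le_of_tendsto h1 ?_
  filter_upwards [eventually_ge_atTop N] with M hM
  rw [← Finset.sum_range_add_sum_Ico _ hM, add_comm]
  gcongr
  calc ∑ m ∈ Finset.Ico N M, t ^ m / (m.factorial : ℝ)
      ≤ ∑ m ∈ Finset.Ico N M, (1 / 2) ^ N * ((2 * t) ^ m / (m.factorial : ℝ)) := by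
        apply Finset.sum_le_sum
        intro m hm
        have hm' := (Finset.mem_Ico.1 hm).1
        have h2 : (1 / 2 : ℝ) ^ N * 2 ^ m ≥ 1 := by
          rw [one_div, inv_pow, ge_iff_le, ← div_eq_inv_mul, le_div_iff₀ (by positivity), one_mul]
          exact pow_le_pow_right₀ (by norm_num) hm'
        have h3 : 0 ≤ t ^ m / (m.factorial : ℝ) := by positivity
        calc t ^ m / (m.factorial : ℝ) ≤ ((1 / 2 : ℝ) ^ N * 2 ^ m) * (t ^ m / (m.factorial : ℝ)) :=
              le_mul_of_one_le_left h3 h2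
          _ = _ := by rw [mul_pow]; ring
    _ = (1 / 2) ^ N * ∑ m ∈ Finset.Ico N M, ((2 * t) ^ m / (m.factorial : ℝ)) := by
        rw [Finset.mul_sum]
    _ ≤ (1 / 2) ^ N * ∑ m ∈ Finset.range M, ((2 * t) ^ m / (m.factorial : ℝ)) := by
        gcongr
        intro m hm
        simp only [Finset.mem_Ico, Finset.mem_range] at *
        exact hm.2
    _ ≤ _ := by
        gcongr
        exact Real.sum_le_exp_of_nonneg (by positivity) M

variable {d : ℕ}

/-- Evaluation of a polynomial at a real point. -/
noncomputable def ev (x : EuclideanSpace ℝ (Fin d)) : MvPolynomial (Fin d) ℂ →+* ℂ :=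
  MvPolynomial.eval (fun i => (x i : ℂ))

lemma ev_bdd (p : MvPolynomial (Fin d) ℂ) : ∀ δ : ℝ, 0 < δ →
    ∃ C : ℝ, 0 < C ∧ ∀ x : EuclideanSpace ℝ (Fin d), ‖ev x p‖ * Real.exp (-δ * ‖x‖ ^ 2) ≤ C := by
  induction p using MvPolynomial.induction_on with
  | C a =>
    intro δ hδ
    refine ⟨‖a‖ + 1, by positivity, fun x => ?_⟩
    simp only [ev, MvPolynomial.eval_C]
    have : Real.exp (-δ * ‖x‖ ^ 2) ≤ 1 := by
      rw [Real.exp_le_one_iff]; nlinarith [sq_nonneg ‖x‖, mul_nonneg hδ.le (sq_nonneg ‖x‖)]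
    nlinarith [norm_nonneg a]
  | add p q hp hq =>
    intro δ hδ
    obtain ⟨C, hC, h⟩ := hp δ hδ
    obtain ⟨C', hC', h'⟩ := hq δ hδ
    refine ⟨C + C', by positivity, fun x => ?_⟩
    rw [map_add]
    have := norm_add_le (ev x p) (ev x q)
    calc _ ≤ (‖ev x p‖ + ‖ev x q‖) * Real.exp (-δ * ‖x‖ ^ 2) := by gcongr
      _ ≤ _ := by rw [add_mul]; exact add_le_add (h x) (h' x)
  | mul_X p i hp =>
    intro δ hδ
    obtain ⟨C, hC, h⟩ := hp (δ / 2) (by positivity)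
    refine ⟨C * (1 + 2 / δ), by positivity, fun x => ?_⟩
    have h1 : ‖ev x (MvPolynomial.X i)‖ ≤ ‖x‖ := by
      simp only [ev, MvPolynomial.eval_X, Complex.norm_real]
      exact PiLp.norm_apply_le x i
    have h2 : ‖x‖ * Real.exp (-(δ / 2) * ‖x‖ ^ 2) ≤ 1 + 2 / δ := by
      rw [neg_mul, Real.exp_neg, ← div_eq_mul_inv, div_le_iff₀ (Real.exp_pos _)]
      have h3 := Real.add_one_le_exp (δ / 2 * ‖x‖ ^ 2)
      have h4 : (1 + 2 / δ) * (δ / 2 * ‖x‖ ^ 2 + 1) ≤ (1 + 2 / δ) * Real.exp (δ / 2 * ‖x‖ ^ 2) := by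
        gcongr
      refine le_trans ?_ h4
      have h5 : (1 + 2 / δ) * (δ / 2 * ‖x‖ ^ 2 + 1) = δ / 2 * ‖x‖ ^ 2 + 1 + ‖x‖ ^ 2 + 2 / δ := by
        field_simp
        ring
      rw [h5]
      have : 0 < 2 / δ := by positivity
      have : 0 ≤ δ / 2 * ‖x‖ ^ 2 := by positivity
      nlinarith [sq_nonneg (‖x‖ - 1)]
    have h6 : Real.exp (-δ * ‖x‖ ^ 2) =
        Real.exp (-(δ / 2) * ‖x‖ ^ 2) * Real.exp (-(δ / 2) * ‖x‖ ^ 2) := by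
      rw [← Real.exp_add]; congr 1; ring
    rw [map_mul, norm_mul, h6]
    calc _ = (‖ev x p‖ * Real.exp (-(δ / 2) * ‖x‖ ^ 2)) *
          (‖ev x (MvPolynomial.X i)‖ * Real.exp (-(δ / 2) * ‖x‖ ^ 2)) := by ring
      _ ≤ C * (1 + 2 / δ) := by
        apply mul_le_mul (h x) _ (by positivity) hC.le
        exact le_trans (by gcongr) h2

/-- `g` is a uniform limit of functions `p e^{-a|x|^2}`. -/
def App (a : ℝ) (g : EuclideanSpace ℝ (Fin d) → ℂ) : Prop :=
  ∀ ε : ℝ, 0 < ε → ∃ q : MvPolynomial (Fin d) ℂ, ∀ x : EuclideanSpace ℝ (Fin d),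
    ‖ev x q * (Real.exp (-a * ‖x‖ ^ 2) : ℂ) - g x‖ < ε

lemma App.add {a : ℝ} {g h : EuclideanSpace ℝ (Fin d) → ℂ} (hg : App a g) (hh : App a h) :
    App a (fun x => g x + h x) := by
  intro ε hε
  obtain ⟨q, hq⟩ := hg (ε / 2) (by positivity)
  obtain ⟨r, hr⟩ := hh (ε / 2) (by positivity)
  refine ⟨q + r, fun x => ?_⟩
  rw [map_add]
  calc _ = ‖(ev x q * (Real.exp (-a * ‖x‖ ^ 2) : ℂ) - g x) +
        (ev x r * (Real.exp (-a * ‖x‖ ^ 2) : ℂ) - h x)‖ := by congr 1; ring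
    _ ≤ _ := norm_add_le _ _
    _ < ε := by linarith [hq x, hr x]

/-- The polynomial `|x|^2`. -/
noncomputable def nsq (d : ℕ) : MvPolynomial (Fin d) ℂ := ∑ i, MvPolynomial.X i ^ 2

lemma ev_nsq (x : EuclideanSpace ℝ (Fin d)) : ev x (nsq d) = ((‖x‖ ^ 2 : ℝ) : ℂ) := by
  rw [EuclideanSpace.real_norm_sq_eq]
  simp [ev, nsq]

lemma App.base (a b : ℝ) (hb : 0 < b) (hab : 4 * b ≤ a) (p : MvPolynomial (Fin d) ℂ) :
    App a (fun x => ev x p * (Real.exp (-(a + b) * ‖x‖ ^ 2) : ℂ)) := by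
  intro ε hε
  obtain ⟨C, hC, h⟩ := ev_bdd p (2 * b) (by positivity)
  obtain ⟨N, hN⟩ := exists_pow_lt_of_lt_one (show 0 < ε / C by positivity)
    (show (1 / 2 : ℝ) < 1 by norm_num)
  refine ⟨p * ∑ m ∈ Finset.range N, MvPolynomial.C ((-b : ℂ) ^ m / (m.factorial : ℂ)) * nsq d ^ m,
    fun x => ?_⟩
  set s : ℝ := ‖x‖ ^ 2 with hs
  have hs0 : 0 ≤ s := by positivity
  have e1 : ev x (∑ m ∈ Finset.range N, MvPolynomial.C ((-b : ℂ) ^ m / (m.factorial : ℂ)) * nsq d ^ m)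
      = ∑ m ∈ Finset.range N, ((-(b * s) : ℝ) : ℂ) ^ m / (m.factorial : ℂ) := by
    rw [map_sum]
    refine Finset.sum_congr rfl fun m _ => ?_
    rw [map_mul, map_pow, ev_nsq, ← hs]
    simp only [ev, MvPolynomial.eval_C]
    push_cast
    rw [neg_pow ((b : ℂ) * s), neg_pow (b : ℂ), mul_pow]
    ring
  have e2 : (Real.exp (-(a + b) * s) : ℂ) = Complex.exp ((-(b * s) : ℝ) : ℂ) * (Real.exp (-a * s) : ℂ) := by
    rw [← Complex.ofReal_exp, ← Complex.ofReal_mul, ← Real.exp_add]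
    congr 2; ring
  have e3 := Complex.norm_exp_sub_sum_le_exp_norm_sub_sum ((-(b * s) : ℝ) : ℂ) N
  have e4 : ‖((-(b * s) : ℝ) : ℂ)‖ = b * s := by
    rw [Complex.norm_real, norm_neg, Real.norm_of_nonneg (by positivity)]
  rw [e4] at e3
  have e5 := e3.trans (exp_tail (b * s) (by positivity) N)
  beta_reduce
  rw [← hs, map_mul, e1, e2]
  have e6 : Real.exp (2 * (b * s)) * Real.exp (-a * s) ≤ Real.exp (-(2 * b) * s) := by
    rw [← Real.exp_add, Real.exp_le_exp]; nlinarith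
  calc _ = ‖-(ev x p * (Real.exp (-a * s) : ℂ) * (Complex.exp ((-(b * s) : ℝ) : ℂ) -
        ∑ m ∈ Finset.range N, ((-(b * s) : ℝ) : ℂ) ^ m / (m.factorial : ℂ)))‖ := by
          congr 1; ring
    _ = ‖ev x p‖ * Real.exp (-a * s) * ‖(Complex.exp ((-(b * s) : ℝ) : ℂ) -
        ∑ m ∈ Finset.range N, ((-(b * s) : ℝ) : ℂ) ^ m / (m.factorial : ℂ))‖ := by
          rw [norm_neg, norm_mul, norm_mul, Complex.norm_real, Real.norm_of_nonneg (Real.exp_pos _).le]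
    _ ≤ ‖ev x p‖ * Real.exp (-a * s) * ((1 / 2) ^ N * Real.exp (2 * (b * s))) := by gcongr
    _ = (1 / 2) ^ N * (‖ev x p‖ * (Real.exp (2 * (b * s)) * Real.exp (-a * s))) := by ring
    _ ≤ (1 / 2) ^ N * (‖ev x p‖ * Real.exp (-(2 * b) * s)) := by gcongr
    _ ≤ (1 / 2) ^ N * C := by gcongr; exact h x
    _ < ε := by rwa [lt_div_iff₀ hC] at hN

lemma App.step (a b : ℝ) (hb : 0 < b) (hab : 4 * b ≤ a) {g : EuclideanSpace ℝ (Fin d) → ℂ}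
    (hg : App (a + b) g) : App a g := by
  intro ε hε
  obtain ⟨q, hq⟩ := hg (ε / 2) (by positivity)
  obtain ⟨r, hr⟩ := App.base a b hb hab q (ε / 2) (by positivity)
  refine ⟨r, fun x => ?_⟩
  have := norm_sub_le_norm_sub_add_norm_sub (ev x r * (Real.exp (-a * ‖x‖ ^ 2) : ℂ))
    (ev x q * (Real.exp (-(a + b) * ‖x‖ ^ 2) : ℂ)) (g x)
  linarith [hq x, hr x]

lemma App.multi (c : ℝ) (hc : 0 < c) {g : EuclideanSpace ℝ (Fin d) → ℂ} (n : ℕ) :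
    App (c + n * (c / 4)) g → App c g := by
  induction n with
  | zero => simp
  | succ n ih =>
    intro h
    apply ih
    apply App.step _ (c / 4) (by positivity)
    · have : 0 ≤ n * (c / 4) := by positivity
      linarith
    · convert h using 1; push_cast; ring

lemma App.exact (a : ℝ) (p : MvPolynomial (Fin d) ℂ) :
    App a (fun x => ev x p * (Real.exp (-a * ‖x‖ ^ 2) : ℂ)) :=
  fun ε hε => ⟨p, fun x => by simpa using hε⟩

/-- The Gaussian. -/
noncomputable def G (c : ℝ) (x : EuclideanSpace ℝ (Fin d)) : ℂ := (Real.exp (-c * ‖x‖ ^ 2) : ℂ)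

lemma App.poly (c : ℝ) (hc : 0 < c) (Q : Polynomial (MvPolynomial (Fin d) ℂ)) :
    App c (fun x => G c x * Q.eval₂ (ev x) (G c x)) := by
  induction Q using Polynomial.induction_on' with
  | add p q hp hq =>
    convert hp.add hq using 2 with x
    rw [Polynomial.eval₂_add]; ring
  | monomial n p =>
    apply App.multi c hc (4 * n)
    convert App.exact (c + ((4 * n : ℕ) : ℝ) * (c / 4)) p using 2 with x
    rw [Polynomial.eval₂_monomial, G, mul_left_comm]
    congr 1
    rw [← pow_succ', ← Complex.ofReal_pow, ← Real.exp_nat_mul]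
    congr 2; push_cast; ring

lemma G_tendsto (c : ℝ) (hc : 0 < c) (p : MvPolynomial (Fin d) ℂ) :
    Tendsto (fun x => ev x p * G c x) (cocompact (EuclideanSpace ℝ (Fin d))) (nhds 0) := by
  obtain ⟨C, hC, h⟩ := ev_bdd p (c / 2) (by positivity)
  have h1 : Tendsto (fun x : EuclideanSpace ℝ (Fin d) => C * Real.exp (-(c / 2 * ‖x‖ ^ 2)))
      (cocompact _) (nhds 0) := by
    rw [← mul_zero C]
    apply Tendsto.const_mul
    apply Real.tendsto_exp_neg_atTop_nhds_zero.comp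
    apply Tendsto.const_mul_atTop (by positivity)
    exact (tendsto_pow_atTop two_ne_zero).comp tendsto_norm_cocompact_atTop
  refine squeeze_zero_norm (fun x => ?_) h1
  rw [norm_mul, G, Complex.norm_real, Real.norm_of_nonneg (Real.exp_pos _).le]
  calc _ = (‖ev x p‖ * Real.exp (-(c / 2) * ‖x‖ ^ 2)) * Real.exp (-(c / 2 * ‖x‖ ^ 2)) := by
        rw [mul_assoc, ← Real.exp_add]; congr 2; ring
    _ ≤ _ := by gcongr; exact h x

lemma G_cont (c : ℝ) (p : MvPolynomial (Fin d) ℂ) :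
    Continuous (fun x : EuclideanSpace ℝ (Fin d) => ev x p * G c x) := by
  apply Continuous.mul
  · unfold ev
    have := MvPolynomial.continuous_eval p
    exact this.comp (by fun_prop)
  · unfold G; fun_prop

/-- Extension to the one point compactification. -/
noncomputable def ext0 (f : EuclideanSpace ℝ (Fin d) → ℂ) (hf : Continuous f)
    (hf0 : Tendsto f (cocompact (EuclideanSpace ℝ (Fin d))) (nhds 0)) :
    C(OnePoint (EuclideanSpace ℝ (Fin d)), ℂ) :=
  OnePoint.continuousMapMk ⟨f, hf⟩ 0 (by rw [coclosedCompact_eq_cocompact]; exact hf0)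

lemma G_star (c : ℝ) (x : EuclideanSpace ℝ (Fin d)) : star (G c x) = G c x :=
  Complex.conj_ofReal _

lemma ev_star (x : EuclideanSpace ℝ (Fin d)) :
    (ev x).comp (MvPolynomial.map (starRingEnd ℂ)) = (starRingEnd ℂ).comp (ev x) := by
  apply MvPolynomial.ringHom_ext
  · intro r; simp [ev]
  · intro i; simp [ev]

/-- The algebra `ℂ + span {p e^{-nc|x|^2} : n ≥ 1}`. -/
noncomputable def Alg (d : ℕ) (c : ℝ) :
    StarSubalgebra ℂ C(OnePoint (EuclideanSpace ℝ (Fin d)), ℂ) where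
  carrier := {F | ∃ Q : Polynomial (MvPolynomial (Fin d) ℂ), ∀ x : EuclideanSpace ℝ (Fin d),
    F (x : OnePoint (EuclideanSpace ℝ (Fin d))) = F OnePoint.infty + G c x * Q.eval₂ (ev x) (G c x)}
  mul_mem' := by
    rintro F H ⟨Q, hQ⟩ ⟨R, hR⟩
    refine ⟨Polynomial.C (MvPolynomial.C (F OnePoint.infty)) * R +
      Polynomial.C (MvPolynomial.C (H OnePoint.infty)) * Q + Polynomial.X * Q * R, fun x => ?_⟩
    have : ∀ z, ev x (MvPolynomial.C z) = z := fun z => by simp [ev]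
    simp only [ContinuousMap.mul_apply, hQ, hR, Polynomial.eval₂_add, Polynomial.eval₂_mul,
      Polynomial.eval₂_C, Polynomial.eval₂_X, this]
    ring
  add_mem' := by
    rintro F H ⟨Q, hQ⟩ ⟨R, hR⟩
    refine ⟨Q + R, fun x => ?_⟩
    simp only [ContinuousMap.add_apply, hQ, hR, Polynomial.eval₂_add]
    ring
  algebraMap_mem' := fun r => ⟨0, fun x => by simp⟩
  star_mem' := by
    rintro F ⟨Q, hQ⟩
    refine ⟨Q.map (MvPolynomial.map (starRingEnd ℂ)), fun x => ?_⟩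
    rw [ContinuousMap.star_apply, ContinuousMap.star_apply, hQ, star_add, star_mul', G_star,
      Polynomial.eval₂_map, ev_star]
    congr 2
    have := Polynomial.hom_eval₂ Q (ev x) (starRingEnd ℂ) (G c x)
    rw [show starRingEnd ℂ (G c x) = G c x from G_star c x] at this
    exact this

lemma gen_mem (c : ℝ) (hc : 0 < c) (p : MvPolynomial (Fin d) ℂ) :
    ext0 (fun x => ev x p * G c x) (G_cont c p) (G_tendsto c hc p) ∈ Alg d c := by
  refine ⟨Polynomial.C p, fun x => ?_⟩
  rw [Polynomial.eval₂_C]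
  change ev x p * G c x = 0 + _
  ring

lemma G_ne (c : ℝ) (x : EuclideanSpace ℝ (Fin d)) : G c x ≠ 0 :=
  Complex.ofReal_ne_zero.2 (Real.exp_pos _).ne'

lemma Alg_sep (d : ℕ) (c : ℝ) (hc : 0 < c) : (Alg d c).SeparatesPoints := by
  have key : ∀ x y : OnePoint (EuclideanSpace ℝ (Fin d)),
      (∀ p : MvPolynomial (Fin d) ℂ,
        ext0 (fun x => ev x p * G c x) (G_cont c p) (G_tendsto c hc p) x =
        ext0 (fun x => ev x p * G c x) (G_cont c p) (G_tendsto c hc p) y) → x = y := by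
    intro x y h
    induction x using OnePoint.rec with
    | infty =>
      induction y using OnePoint.rec with
      | infty => rfl
      | coe y =>
        have h1 : (0 : ℂ) = ev y 1 * G c y := h 1
        rw [map_one, one_mul] at h1
        exact absurd h1.symm (G_ne c y)
    | coe x =>
      induction y using OnePoint.rec with
      | infty =>
        have h1 : ev x 1 * G c x = 0 := h 1
        rw [map_one, one_mul] at h1
        exact absurd h1 (G_ne c x)
      | coe y =>
        have h1 : ev x 1 * G c x = ev y 1 * G c y := h 1
        rw [map_one, map_one, one_mul, one_mul] at h1
        congr 1
        ext i
        have h2 : ev x (MvPolynomial.X i) * G c x = ev y (MvPolynomial.X i) * G c y :=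
          h (MvPolynomial.X i)
        rw [h1] at h2
        have h3 := mul_right_cancel₀ (G_ne c y) h2
        simpa [ev] using h3
  intro x y hxy
  by_contra hcon
  apply hxy
  apply key
  intro p
  by_contra hp
  exact hcon ⟨_, ⟨_, gen_mem c hc p, rfl⟩, hp⟩

end Helpers

/-- For every dimension `d ≥ 1` and constant `c > 0`, the functions
`x ↦ p(x₁,…,x_d)·e^{-c|x|²}` (`p` a complex polynomial in `d` variables) are dense in
`C₀(ℝᵈ, ℂ)` with respect to the supremum norm. -/
theorem stmt_0 (d : ℕ) (hd : 1 ≤ d) (c : ℝ) (hc : 0 < c)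
    (f : EuclideanSpace ℝ (Fin d) → ℂ) (hf : Continuous f)
    (hf0 : Tendsto f (cocompact (EuclideanSpace ℝ (Fin d))) (nhds 0))
    (ε : ℝ) (hε : 0 < ε) :
    ∃ q : MvPolynomial (Fin d) ℂ, ∀ x : EuclideanSpace ℝ (Fin d),
      ‖MvPolynomial.eval (fun i => (x i : ℂ)) q * (Real.exp (-c * ‖x‖ ^ 2) : ℂ) - f x‖ < ε := by
  have hA := ContinuousMap.starSubalgebra_topologicalClosure_eq_top_of_separatesPoints
    (Alg d c) (Alg_sep d c hc)
  have hmem : ext0 f hf hf0 ∈ (Alg d c).topologicalClosure := by rw [hA]; trivial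
  have hmem' : ext0 f hf hf0 ∈ closure ((Alg d c : Set C(OnePoint (EuclideanSpace ℝ (Fin d)), ℂ))) :=
    hmem
  rw [Metric.mem_closure_iff] at hmem'
  obtain ⟨F, ⟨Q, hQ⟩, hF⟩ := hmem' (ε / 3) (by positivity)
  obtain ⟨q, hq⟩ := App.poly c hc Q (ε / 3) (by positivity)
  refine ⟨q, fun x => ?_⟩
  have h1 := (ContinuousMap.dist_apply_le_dist
    (f := ext0 f hf hf0) (g := F) OnePoint.infty).trans_lt hF
  have h2 := (ContinuousMap.dist_apply_le_dist
    (f := ext0 f hf hf0) (g := F) (x : OnePoint (EuclideanSpace ℝ (Fin d)))).trans_lt hF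
  have e1 : ext0 f hf hf0 OnePoint.infty = 0 := rfl
  have e2 : ext0 f hf hf0 (x : OnePoint (EuclideanSpace ℝ (Fin d))) = f x := rfl
  rw [e1, dist_zero_left] at h1
  rw [e2, dist_comm, dist_eq_norm, hQ] at h2
  have h3 := hq x
  set u := F OnePoint.infty
  set v := G c x * Q.eval₂ (ev x) (G c x)
  set w := ev x q * (Real.exp (-c * ‖x‖ ^ 2) : ℂ)
  change ‖w - f x‖ < ε
  calc ‖w - f x‖ = ‖(w - v) + (u + v - f x) - u‖ := by congr 1; ring
    _ ≤ ‖w - v‖ + ‖u + v - f x‖ + ‖u‖ := (norm_sub_le _ _).trans (by gcongr; exact norm_add_le _ _)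
    _ < ε := by linarith
end

section
/- Let μ be a σ-finite Borel measure on ℂ and let f : ℂ → ℂ be Borel measurable. Then there exists a sequence (pₙ) of complex polynomials in z such that pₙ(z) → f(z) for μ-almost every z ∈ ℂ. -/
open MeasureTheory Filter

lemma aux_preconn (C D : Set ℝ) (a b : ℝ) (ha : a ∉ C) (hb : b ∉ D) :
    IsPreconnected ((C ×ℂ D)ᶜ) := by
  have hre : ∀ t : ℝ, IsPreconnected {z : ℂ | z.re = t} := fun t =>
    ((convex_singleton t).linear_preimage Complex.reLm : Convex ℝ (Complex.reLm ⁻¹' {t})).isPreconnected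
  have him : ∀ t : ℝ, IsPreconnected {z : ℂ | z.im = t} := fun t =>
    ((convex_singleton t).linear_preimage Complex.imLm : Convex ℝ (Complex.imLm ⁻¹' {t})).isPreconnected
  have hcross : ∀ s t : ℝ, IsPreconnected ({z : ℂ | z.re = s} ∪ {z : ℂ | z.im = t}) := fun s t =>
    IsPreconnected.union (⟨s, t⟩ : ℂ) rfl rfl (hre s) (him t)
  refine isPreconnected_of_forall (⟨a, b⟩ : ℂ) ?_
  intro w hw
  simp only [Set.mem_compl_iff, Complex.mem_reProdIm, not_and_or] at hw
  rcases hw with hw | hw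
  · refine ⟨({z : ℂ | z.re = w.re} ∪ {z : ℂ | z.im = b}), ?_, Or.inr rfl, Or.inl rfl, hcross _ _⟩
    rintro z (hz | hz) hz' <;> simp only [Set.mem_ofPred_eq] at hz <;>
      rw [Complex.mem_reProdIm, hz] at hz' <;> tauto
  · refine ⟨({z : ℂ | z.re = a} ∪ {z : ℂ | z.im = w.im}), ?_, Or.inl rfl, Or.inr rfl, hcross _ _⟩
    rintro z (hz | hz) hz' <;> simp only [Set.mem_ofPred_eq] at hz <;>
      rw [Complex.mem_reProdIm, hz] at hz' <;> tauto

lemma aux_inv (K : Set ℂ) [CompactSpace K] (hK : IsPreconnected Kᶜ) (p : Polynomial ℂ)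
    (hp : ∀ z ∈ K, p.eval z ≠ 0) :
    ∃ g ∈ (polynomialFunctions K).topologicalClosure, ∀ z : K, g z = (p.eval (z : ℂ))⁻¹ := by
  rcases isEmpty_or_nonempty K with hE | hE
  · exact ⟨0, Subalgebra.zero_mem _, fun z => (hE.false z).elim⟩
  let A := (polynomialFunctions K).topologicalClosure
  let x₀ : C(K, ℂ) := Polynomial.toContinuousMapOnAlgHom K Polynomial.X
  have hx₀ : x₀ ∈ A := Subalgebra.le_topologicalClosure _ ⟨Polynomial.X, trivial, rfl⟩
  let x : A := ⟨x₀, hx₀⟩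
  have : IsClosed (A : Set C(K, ℂ)) := Subalgebra.isClosed_topologicalClosure _
  have hsp : spectrum ℂ (x : C(K, ℂ)) = K := by
    rw [ContinuousMap.spectrum_eq_range]
    ext z; simp [x, x₀]
  have h1 : spectrum ℂ x = K := by
    refine (Subalgebra.spectrum_eq_of_isPreconnected_compl A x ?_).trans hsp
    rw [hsp]; exact hK
  have h2 : spectrum ℂ (Polynomial.aeval x p) = (fun k => Polynomial.eval k p) '' K := by
    rw [spectrum.map_polynomial_aeval_of_nonempty, h1]
    rw [h1]; exact Set.nonempty_coe_sort.1 hE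
  have h3 : IsUnit (Polynomial.aeval x p) := by
    rw [← spectrum.zero_notMem_iff ℂ, h2]
    rintro ⟨z, hz, h⟩
    exact hp z hz h
  obtain ⟨u, hu⟩ := h3
  refine ⟨((↑u⁻¹ : A) : C(K, ℂ)), (↑u⁻¹ : A).2, fun z => ?_⟩
  have h4 : ((u : A) : C(K, ℂ)) * ((↑u⁻¹ : A) : C(K, ℂ)) = 1 := by
    exact congrArg (Subtype.val) u.mul_inv
  have h5 : ((u : A) : C(K, ℂ)) = Polynomial.toContinuousMapOnAlgHom K p := by
    rw [hu]
    have : ((Polynomial.aeval x p : A) : C(K, ℂ)) = Polynomial.aeval x₀ p :=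
      (Polynomial.aeval_algHom_apply A.val x p).symm
    rw [this]
    have := Polynomial.aeval_algHom_apply (Polynomial.toContinuousMapOnAlgHom K) Polynomial.X p
    rw [this, Polynomial.aeval_X_left_apply]
  rw [h5] at h4
  have h6 := congrArg (fun f : C(K, ℂ) => f z) h4
  simp at h6
  exact eq_inv_of_mul_eq_one_right h6

lemma aux_ineq1 (q : ℝ) (w : ℂ) (n : ℕ) (hq : q ^ n < 1) (hw : ‖w‖ ≤ q ) :
    ‖(1 + w ^ n)⁻¹ - 1‖ ≤ q ^ n / (1 - q ^ n) := by
  have h1 : ‖w ^ n‖ ≤ q ^ n := by rw [norm_pow]; gcongr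
  have h2 : 1 - q ^ n ≤ ‖1 + w ^ n‖ := by
    have := norm_sub_norm_le (1 : ℂ) (-(w ^ n))
    simp only [norm_one, norm_neg, sub_neg_eq_add] at this
    linarith
  have h3 : 1 + w ^ n ≠ 0 := by
    intro h; rw [h, norm_zero] at h2; linarith
  have : (1 + w ^ n)⁻¹ - 1 = -(w ^ n) / (1 + w ^ n) := by field_simp; ring
  rw [this, norm_div, norm_neg]
  have := norm_nonneg (w ^ n)
  have : 0 < 1 - q ^ n := by linarith
  gcongr
  linarith

lemma aux_ineq2 (q : ℝ) (w : ℂ) (n : ℕ) (hq : q ^ n < 1) (hq0 : 0 < q) (hw : q⁻¹ ≤ ‖w‖) :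
    ‖(1 + w ^ n)⁻¹‖ ≤ q ^ n / (1 - q ^ n) := by
  have hw0 : w ≠ 0 := by
    rintro rfl; rw [norm_zero] at hw; have := inv_pos.2 hq0; linarith
  have hw' : ‖w⁻¹‖ ≤ q := by
    rw [norm_inv]; exact inv_le_of_inv_le₀ hq0 hw
  have h1 := aux_ineq1 q w⁻¹ n hq hw'
  have h3 : 1 + (w⁻¹) ^ n ≠ 0 := by
    intro h
    have h4 : ‖(w⁻¹) ^ n‖ ≤ q ^ n := by rw [norm_pow]; gcongr
    have : (w⁻¹) ^ n = -1 := by linear_combination h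
    rw [this] at h4; simp at h4; linarith
  have h4 : (1 + w ^ n)⁻¹ = -((1 + w⁻¹ ^ n)⁻¹ - 1) := by
    have h5 : 1 + w ^ n = w ^ n * (1 + w⁻¹ ^ n) := by
      rw [mul_add, ← mul_pow, mul_inv_cancel₀ hw0]; ring
    have h6 : w ^ n ≠ 0 := pow_ne_zero _ hw0
    rw [h5]
    rw [mul_inv, ← inv_pow]
    generalize w⁻¹ ^ n = v at h3
    field_simp
    ring
  rw [h4, norm_neg]; exact h1

lemma aux_ind (K : Set ℂ) [CompactSpace K] (hK : IsPreconnected Kᶜ) (c : ℂ) (R : ℝ) (hR : 0 < R)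
    (h : ∀ z ∈ K, ‖z - c‖ ≠ R) :
    ∃ g ∈ (polynomialFunctions K).topologicalClosure, ∀ z : K, g z = if ‖(z : ℂ) - c‖ < R then 1 else 0 := by
  classical
  rcases isEmpty_or_nonempty K with hE | hE
  · exact ⟨0, Subalgebra.zero_mem _, fun z => (hE.false z).elim⟩
  have hcont : Continuous (fun z : K => if ‖(z : ℂ) - c‖ < R then (1 : ℂ) else 0) := by
    refine Continuous.if ?_ continuous_const continuous_const
    intro z hz
    exfalso
    have := frontier_lt_subset_eq (f := fun z : K => ‖(z : ℂ) - c‖) (g := fun _ => R) (by fun_prop) (by fun_prop) hz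
    exact h z z.2 this
  let g : C(K, ℂ) := ⟨_, hcont⟩
  refine ⟨g, ?_, fun z => rfl⟩
  -- the gap
  obtain ⟨q, hq0, hq1, hq⟩ : ∃ q : ℝ, 0 < q ∧ q < 1 ∧ ∀ z : K,
      (‖(z : ℂ) - c‖ < R → ‖((z : ℂ) - c) / R‖ ≤ q) ∧ (¬ ‖(z : ℂ) - c‖ < R → q⁻¹ ≤ ‖((z : ℂ) - c) / R‖) := by
    let φ : K → ℝ := fun z => min (‖(z : ℂ) - c‖ / R) (R / max ‖(z : ℂ) - c‖ R)
    have hφ : Continuous φ := by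
      refine Continuous.min (by fun_prop) (Continuous.div (by fun_prop) (by fun_prop) ?_)
      intro z; exact (lt_of_lt_of_le hR (le_max_right _ _)).ne'
    obtain ⟨z₀, -, hz₀⟩ := isCompact_univ.exists_isMaxOn (Set.univ_nonempty) hφ.continuousOn
    have hlt : φ z₀ < 1 := by
      rcases lt_or_gt_of_ne (h z₀ z₀.2) with h' | h'
      · exact (min_le_left _ _).trans_lt ((div_lt_one hR).2 h')
      · refine (min_le_right _ _).trans_lt ((div_lt_one ?_).2 ?_)
        · exact lt_of_lt_of_le hR (le_max_right _ _)
        · exact h'.trans_le (le_max_left _ _)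
    refine ⟨max (φ z₀) (1/2), by positivity, max_lt hlt (by norm_num), fun z => ?_⟩
    have hz : φ z ≤ max (φ z₀) (1/2) := (hz₀ (Set.mem_univ z)).trans (le_max_left _ _)
    have hnorm : ‖((z : ℂ) - c) / R‖ = ‖(z : ℂ) - c‖ / R := by
      rw [norm_div, Complex.norm_real, Real.norm_of_nonneg hR.le]
    rw [hnorm]
    constructor
    · intro hlt'
      have : φ z = ‖(z : ℂ) - c‖ / R := by
        simp only [φ, max_eq_right hlt'.le, div_self hR.ne']
        exact min_eq_left ((div_lt_one hR).2 hlt').le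
      rw [← this]; exact hz
    · intro hge
      have hgt : R < ‖(z : ℂ) - c‖ := lt_of_le_of_ne (not_lt.1 hge) (Ne.symm (h z z.2))
      have : φ z = R / ‖(z : ℂ) - c‖ := by
        simp only [φ, max_eq_left hgt.le]
        apply min_eq_right
        exact ((div_lt_one (hR.trans hgt)).2 hgt).le.trans ((one_lt_div hR).2 hgt).le
      rw [this] at hz
      rw [← inv_div R]
      have h0 : 0 < R / ‖(z : ℂ) - c‖ := div_pos hR (hR.trans hgt)
      exact inv_anti₀ h0 hz
  have hmem : ∀ n : ℕ, ∃ F ∈ (polynomialFunctions K).topologicalClosure, n ≠ 0 → 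
      ∀ z : K, F z = (1 + (((z : ℂ) - c) / R) ^ n)⁻¹ := by
    intro n
    by_cases hn : n = 0
    · exact ⟨0, Subalgebra.zero_mem _, fun h => (h hn).elim⟩
    obtain ⟨F, hF, hF'⟩ := aux_inv K hK (1 + (Polynomial.C (R : ℂ)⁻¹ * (Polynomial.X - Polynomial.C c)) ^ n) (by
      intro z hz h0
      simp only [Polynomial.eval_add, Polynomial.eval_one, Polynomial.eval_pow, Polynomial.eval_mul, Polynomial.eval_C, Polynomial.eval_sub, Polynomial.eval_X] at h0
      have h1 : ((R : ℂ)⁻¹ * (z - c)) ^ n = -1 := by linear_combination h0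
      have h2 := congrArg norm h1
      rw [norm_pow, norm_neg, norm_one] at h2
      have h3 := (pow_eq_one_iff_of_nonneg (norm_nonneg _) hn).1 h2
      rw [norm_mul, norm_inv, Complex.norm_real, Real.norm_of_nonneg hR.le] at h3
      apply h z hz
      field_simp at h3
      exact h3)
    refine ⟨F, hF, fun _ z => ?_⟩
    rw [hF']
    simp [div_eq_inv_mul]
  choose F hF hF' using hmem
  have hlim : Tendsto (fun n : ℕ => q ^ n / (1 - q ^ n)) atTop (nhds 0) := by
    have h1 := tendsto_pow_atTop_nhds_zero_of_lt_one hq0.le hq1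
    have := h1.div (tendsto_const_nhds (x := (1:ℝ)).sub h1) (by simp)
    rw [sub_zero, zero_div] at this
    exact this
  have hconv : Tendsto F atTop (nhds g) := by
    rw [tendsto_iff_norm_sub_tendsto_zero]
    refine squeeze_zero' (Eventually.of_forall fun _ => norm_nonneg _) ?_ hlim
    filter_upwards [eventually_ge_atTop 1] with n hn
    have hn0 : n ≠ 0 := by omega
    have hqn : q ^ n < 1 := pow_lt_one₀ hq0.le hq1 hn0
    rw [ContinuousMap.norm_le _ (div_nonneg (by positivity) (by linarith))]
    intro z
    rw [ContinuousMap.sub_apply, hF' n hn0 z]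
    by_cases hz : ‖(z : ℂ) - c‖ < R
    · have : g z = 1 := if_pos hz
      rw [this]; exact aux_ineq1 q _ n hqn ((hq z).1 hz)
    · have : g z = 0 := if_neg hz
      rw [this, sub_zero]; exact aux_ineq2 q _ n hqn hq0 ((hq z).2 hz)
  exact (Subalgebra.isClosed_topologicalClosure _).mem_of_tendsto hconv (Eventually.of_forall hF)

lemma aux_gap (C : Set ℝ) (hC : IsClosed C) (hCd : Dense Cᶜ) (s t : ℝ) (hst : s < t) :
    ∃ a δ, s < a ∧ a < t ∧ 0 < δ ∧ ∀ x ∈ C, δ ≤ |x - a| := by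
  obtain ⟨a, ha, hsa, hat⟩ := hCd.exists_between hst
  obtain ⟨δ, hδ, hb⟩ := Metric.isOpen_iff.1 hC.isOpen_compl a ha
  refine ⟨a, δ, hsa, hat, hδ, fun x hx => ?_⟩
  by_contra hlt
  exact hb (Metric.mem_ball.2 (by rw [Real.dist_eq]; linarith)) hx

lemma aux_circle (s y δ B R : ℝ) (hδ : 0 < δ) (hR : 0 < R) (hs : δ ≤ |s|) (hB : s ^ 2 + y ^ 2 < B)
    (hRB : B ≤ 2 * δ * R) :
    (s < 0 → (s + R) ^ 2 + y ^ 2 < R ^ 2) ∧ (0 < s → R ^ 2 < (s + R) ^ 2 + y ^ 2) ∧ s ≠ 0 := by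
  refine ⟨fun h => ?_, fun h => ?_, ?_⟩
  · rw [abs_of_neg h] at hs
    nlinarith
  · nlinarith [mul_pos h hR, sq_nonneg y, mul_pos h h]
  · rintro rfl; simp at hs; linarith

lemma aux_sep (C D : Set ℝ) (hC : IsCompact C) (hD : IsCompact D) (hCd : Dense Cᶜ) (hDd : Dense Dᶜ)
    (z w : ℂ) (hz : z ∈ C ×ℂ D) (hw : w ∈ C ×ℂ D) (hzw : z.re < w.re ∨ z.im < w.im) :
    ∃ c : ℂ, ∃ R : ℝ, 0 < R ∧ (∀ u ∈ C ×ℂ D, ‖u - c‖ ≠ R) ∧ ‖z - c‖ < R ∧ R < ‖w - c‖ := by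
  have hbd : ∀ a : ℂ, ∃ B : ℝ, 0 < B ∧ ∀ u ∈ C ×ℂ D, (u.re - a.re) ^ 2 + (u.im - a.im) ^ 2 < B := by
    intro a
    obtain ⟨B, hB⟩ := (hC.reProdIm hD).exists_bound_of_continuousOn
      (f := fun u : ℂ => (u.re - a.re) ^ 2 + (u.im - a.im) ^ 2) (by fun_prop)
    refine ⟨|B| + 1, by positivity, fun u hu => ?_⟩
    have := (le_abs_self _).trans (hB u hu)
    have := le_abs_self B
    linarith
  have hnorm : ∀ (u c : ℂ), ‖u - c‖ ^ 2 = (u.re - c.re) ^ 2 + (u.im - c.im) ^ 2 := by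
    intro u c
    rw [← Complex.normSq_eq_norm_sq, Complex.normSq_apply]; simp; ring
  rcases hzw with h | h
  · obtain ⟨a, δ, h1, h2, hδ, hgap⟩ := aux_gap C hC.isClosed hCd _ _ h
    obtain ⟨B, hB0, hB⟩ := hbd ⟨a, 0⟩
    have hR : 0 < B / (2 * δ) := by positivity
    set R := B / (2 * δ) with hRdef
    have hRB : B ≤ 2 * δ * R := by rw [hRdef]; field_simp; rfl
    have key : ∀ u ∈ C ×ℂ D, (u.re - a < 0 → ‖u - ⟨a - R, 0⟩‖ ^ 2 < R ^ 2) ∧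
        (0 < u.re - a → R ^ 2 < ‖u - ⟨a - R, 0⟩‖ ^ 2) ∧ u.re - a ≠ 0 := by
      intro u hu
      have := aux_circle (u.re - a) (u.im - 0) δ B R hδ hR (hgap _ hu.1) (hB u hu) hRB
      rw [hnorm]
      have e : u.re - (a - R) = u.re - a + R := by ring
      simp only [e]
      exact this
    refine ⟨⟨a - R, 0⟩, R, hR, fun u hu he => ?_, ?_, ?_⟩
    · have := key u hu
      rw [he] at this
      rcases lt_or_gt_of_ne this.2.2 with h | h
      · exact lt_irrefl _ (this.1 h)
      · exact lt_irrefl _ (this.2.1 h)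
    · exact lt_of_pow_lt_pow_left₀ 2 hR.le ((key z hz).1 (by linarith))
    · exact lt_of_pow_lt_pow_left₀ 2 (norm_nonneg _) ((key w hw).2.1 (by linarith))
  · obtain ⟨a, δ, h1, h2, hδ, hgap⟩ := aux_gap D hD.isClosed hDd _ _ h
    obtain ⟨B, hB0, hB⟩ := hbd ⟨0, a⟩
    have hR : 0 < B / (2 * δ) := by positivity
    set R := B / (2 * δ) with hRdef
    have hRB : B ≤ 2 * δ * R := by rw [hRdef]; field_simp; rfl
    have key : ∀ u ∈ C ×ℂ D, (u.im - a < 0 → ‖u - ⟨0, a - R⟩‖ ^ 2 < R ^ 2) ∧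
        (0 < u.im - a → R ^ 2 < ‖u - ⟨0, a - R⟩‖ ^ 2) ∧ u.im - a ≠ 0 := by
      intro u hu
      have := aux_circle (u.im - a) (u.re - 0) δ B R hδ hR (hgap _ hu.2)
        (by rw [add_comm]; exact hB u hu) hRB
      rw [hnorm]
      have e : u.im - (a - R) = u.im - a + R := by ring
      simp only [e, add_comm ((u.re - 0) ^ 2)]
      exact this
    refine ⟨⟨0, a - R⟩, R, hR, fun u hu he => ?_, ?_, ?_⟩
    · have := key u hu
      rw [he] at this
      rcases lt_or_gt_of_ne this.2.2 with h | h
      · exact lt_irrefl _ (this.1 h)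
      · exact lt_irrefl _ (this.2.1 h)
    · exact lt_of_pow_lt_pow_left₀ 2 hR.le ((key z hz).1 (by linarith))
    · exact lt_of_pow_lt_pow_left₀ 2 (norm_nonneg _) ((key w hw).2.1 (by linarith))

lemma aux_dense (C D : Set ℝ) [CompactSpace (C ×ℂ D)] (hC : IsCompact C) (hD : IsCompact D) (hCd : Dense Cᶜ)
    (hDd : Dense Dᶜ) :
    (polynomialFunctions (C ×ℂ D)).topologicalClosure = ⊤ := by
  obtain ⟨a, ha⟩ := hCd.nonempty
  obtain ⟨b, hb⟩ := hDd.nonempty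
  have hK := aux_preconn C D a b ha hb
  let A := (polynomialFunctions (C ×ℂ D)).topologicalClosure
  let S : Set C(C ×ℂ D, ℂ) := {g | g ∈ A ∧ star g = g}
  let B := StarAlgebra.adjoin ℂ S
  have hS : star S = S := by
    ext g
    constructor
    · rintro ⟨h1, h2⟩
      rw [star_star] at h2
      rw [← h2] at h1
      exact ⟨h2 ▸ h1, h2.symm⟩
    · rintro ⟨h1, h2⟩
      exact ⟨by rwa [h2], by rw [star_star, h2]⟩
  have hBA : B.toSubalgebra ≤ A := by
    rw [StarAlgebra.adjoin_toSubalgebra, hS, Set.union_self]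
    exact Algebra.adjoin_le fun g hg => hg.1
  have hlt : ∀ z w : (C ×ℂ D), ((z : ℂ).re < (w : ℂ).re ∨ (z : ℂ).im < (w : ℂ).im) →
      ∃ g ∈ B, g z ≠ g w := by
    intro z w h
    obtain ⟨c, R, hR, h1, h2, h3⟩ := aux_sep C D hC hD hCd hDd z w z.2 w.2 h
    obtain ⟨g, hg, hg'⟩ := aux_ind _ hK c R hR h1
    refine ⟨g, StarAlgebra.subset_adjoin ℂ S ⟨hg, ?_⟩, ?_⟩
    · ext u
      rw [ContinuousMap.star_apply, hg']
      split_ifs <;> simp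
    · rw [hg', hg', if_pos h2, if_neg h3.not_gt]; exact one_ne_zero
  have hsep : B.SeparatesPoints := by
    intro z w hzw
    have hex : ∃ g ∈ B, g z ≠ g w := by
      have : (z : ℂ) ≠ w := fun h => hzw (Subtype.ext h)
      rw [Ne, Complex.ext_iff, not_and_or] at this
      rcases this with h | h
      · rcases lt_or_gt_of_ne h with h | h
        · exact hlt z w (Or.inl h)
        · obtain ⟨g, h1, h2⟩ := hlt w z (Or.inl h)
          exact ⟨g, h1, h2.symm⟩
      · rcases lt_or_gt_of_ne h with h | h
        · exact hlt z w (Or.inr h)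
        · obtain ⟨g, h1, h2⟩ := hlt w z (Or.inr h)
          exact ⟨g, h1, h2.symm⟩
    obtain ⟨g, h1, h2⟩ := hex
    exact ⟨g, ⟨g, h1, rfl⟩, h2⟩
  have htop := ContinuousMap.starSubalgebra_topologicalClosure_eq_top_of_separatesPoints B hsep
  rw [eq_top_iff]
  intro g _
  have hg : g ∈ B.topologicalClosure := by rw [htop]; trivial
  have hg' : g ∈ closure (B : Set C(C ×ℂ D, ℂ)) := hg
  exact closure_minimal (fun x hx => hBA hx) (Subalgebra.isClosed_topologicalClosure _) hg'

lemma aux_approx (C D : Set ℝ) (hC : IsCompact C) (hD : IsCompact D) (hCd : Dense Cᶜ)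
    (hDd : Dense Dᶜ) (g : ℂ → ℂ) (hg : Continuous g) (ε : ℝ) (hε : 0 < ε) :
    ∃ p : Polynomial ℂ, ∀ z ∈ C ×ℂ D, ‖p.eval z - g z‖ < ε := by
  have : CompactSpace (C ×ℂ D) := isCompact_iff_compactSpace.1 (hC.reProdIm hD)
  let g' : C(C ×ℂ D, ℂ) := ⟨fun z => g z, by fun_prop⟩
  have h : g' ∈ (polynomialFunctions (C ×ℂ D)).topologicalClosure := by
    rw [aux_dense C D hC hD hCd hDd]; trivial
  have h' : g' ∈ closure (polynomialFunctions (C ×ℂ D) : Set C(C ×ℂ D, ℂ)) := h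
  obtain ⟨_, ⟨p, -, rfl⟩, hp⟩ := Metric.mem_closure_iff.1 h' ε hε
  refine ⟨p, fun z hz => ?_⟩
  have := (ContinuousMap.dist_lt_iff hε).1 hp ⟨z, hz⟩
  rw [dist_comm, dist_eq_norm] at this
  simpa [g'] using this

lemma aux_real (ν : Measure ℝ) [IsFiniteMeasure ν] (ε : ENNReal) (hε : 0 < ε) :
    ∃ C : Set ℝ, IsCompact C ∧ Dense Cᶜ ∧ ν Cᶜ ≤ ε := by
  have hc : Set.Countable {t : ℝ | 0 < ν {t}} := by
    simpa using! Measure.countable_meas_level_set_pos (μ := ν) (g := id) measurable_id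
  have hd := hc.dense_compl ℝ
  obtain ⟨t, hts, htc, htd⟩ := hd.exists_countable_dense_subset
  have ht0 : ν t = 0 := by
    rw [measure_null_iff_singleton htc]
    intro x hx
    have := hts hx
    simpa using this
  have hε2 : 0 < ε / 2 := ENNReal.half_pos hε.ne'
  obtain ⟨U, hU, hUo, hUm⟩ := Set.exists_isOpen_lt_of_lt (μ := ν) t (ε / 2) (by rw [ht0]; exact hε2)
  obtain ⟨K, -, hK, hKm⟩ := MeasurableSet.exists_isCompact_sdiff_lt (μ := ν) MeasurableSet.univ
    (measure_ne_top _ _) hε2.ne'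
  refine ⟨K \ U, hK.diff hUo, htd.mono fun x hx h => h.2 (hU hx), ?_⟩
  calc ν (K \ U)ᶜ ≤ ν ((Set.univ \ K) ∪ U) := by
        apply measure_mono
        intro x hx
        by_cases h : x ∈ U
        · exact Or.inr h
        · exact Or.inl ⟨trivial, fun h' => hx ⟨h', h⟩⟩
    _ ≤ ν (Set.univ \ K) + ν U := measure_union_le _ _
    _ ≤ ε / 2 + ε / 2 := add_le_add hKm.le hUm.le
    _ = ε := ENNReal.add_halves ε

lemma aux_step (ν : Measure ℂ) [IsFiniteMeasure ν] (f : ℂ → ℂ) (hf : Integrable f ν)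
    (e : ℝ) (he : 0 < e) :
    ∃ p : Polynomial ℂ, ν {z | ENNReal.ofReal e ≤ edist (p.eval z) (f z)} ≤ ENNReal.ofReal e := by
  have h3 : 0 < ENNReal.ofReal (e / 3) := ENNReal.ofReal_pos.2 (by positivity)
  have h2 : 0 < ENNReal.ofReal (e / 2) := ENNReal.ofReal_pos.2 (by positivity)
  obtain ⟨C, hC, hCd, hCm⟩ := aux_real (ν.map Complex.re) _ h3
  obtain ⟨D, hD, hDd, hDm⟩ := aux_real (ν.map Complex.im) _ h3
  rw [Measure.map_apply Complex.measurable_re hC.isClosed.isOpen_compl.measurableSet] at hCm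
  rw [Measure.map_apply Complex.measurable_im hD.isClosed.isOpen_compl.measurableSet] at hDm
  obtain ⟨g, hg, hgi⟩ := hf.exists_boundedContinuous_lintegral_sub_le
    (ε := ENNReal.ofReal (e / 2) * ENNReal.ofReal (e / 3)) (mul_ne_zero h2.ne' h3.ne')
  obtain ⟨p, hp⟩ := aux_approx C D hC hD hCd hDd g g.continuous (e / 2) (by positivity)
  have hmk : ν {z | ENNReal.ofReal (e / 2) ≤ ‖f z - g z‖ₑ} ≤ ENNReal.ofReal (e / 3) := by
    refine (meas_ge_le_lintegral_div (hf.sub hgi).aestronglyMeasurable.enorm h2.ne'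
      ENNReal.ofReal_ne_top).trans ?_
    refine (ENNReal.div_le_of_le_mul ?_)
    rw [mul_comm]
    exact hg
  refine ⟨p, ?_⟩
  calc _ ≤ ν ((Complex.re ⁻¹' Cᶜ ∪ Complex.im ⁻¹' Dᶜ) ∪
        {z | ENNReal.ofReal (e / 2) ≤ ‖f z - g z‖ₑ}) := by
        apply measure_mono
        intro z hz
        by_contra hcon
        simp only [Set.mem_union, Set.mem_preimage, Set.mem_compl_iff, not_or, not_not,
          Set.mem_ofPred_eq, not_le] at hcon hz
        obtain ⟨⟨h1, h2⟩, h3⟩ := hcon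
        have h4 := hp z ⟨h1, h2⟩
        rw [← ofReal_norm, ENNReal.ofReal_lt_ofReal_iff (by positivity)] at h3
        rw [edist_dist, ENNReal.ofReal_le_ofReal_iff dist_nonneg, dist_eq_norm] at hz
        have h5 : ‖p.eval z - f z‖ ≤ ‖p.eval z - g z‖ + ‖f z - g z‖ := by
          rw [norm_sub_rev (f z)]
          exact norm_sub_le_norm_sub_add_norm_sub _ _ _
        linarith
    _ ≤ ENNReal.ofReal (e / 3) + ENNReal.ofReal (e / 3) + ENNReal.ofReal (e / 3) :=
        (measure_union_le _ _).trans
          (add_le_add ((measure_union_le _ _).trans (add_le_add hCm hDm)) hmk)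
    _ = ENNReal.ofReal e := by
        rw [← ENNReal.ofReal_add (by positivity) (by positivity),
          ← ENNReal.ofReal_add (by positivity) (by positivity)]
        congr 1; ring

lemma aux_fin (ν : Measure ℂ) [IsFiniteMeasure ν] (f : ℂ → ℂ) (hf : Integrable f ν) :
    ∃ P : ℕ → Polynomial ℂ,
      ∀ᵐ z ∂ν, Tendsto (fun n => Polynomial.eval z (P n)) atTop (nhds (f z)) := by
  choose P hP using fun n : ℕ => aux_step ν f hf (1 / ((n : ℝ) + 1)) (by positivity)
  have hlim : Tendsto (fun n : ℕ => ENNReal.ofReal (1 / ((n : ℝ) + 1))) atTop (nhds 0) := by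
    have := ENNReal.tendsto_ofReal (tendsto_one_div_add_atTop_nhds_zero_nat (𝕜 := ℝ))
    simpa using! this
  have hm : TendstoInMeasure ν (fun n z => (P n).eval z) atTop f := by
    intro ε hε
    refine tendsto_of_tendsto_of_tendsto_of_le_of_le' tendsto_const_nhds hlim
      (Eventually.of_forall fun _ => zero_le) ?_
    filter_upwards [hlim.eventually_le_const hε] with n hn
    refine (measure_mono fun z hz => ?_).trans (hP n)
    exact hn.trans hz
  obtain ⟨ns, -, h⟩ := hm.exists_seq_tendsto_ae
  exact ⟨fun n => P (ns n), h⟩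

/-- For a σ-finite Borel measure `μ` on `ℂ` and a Borel measurable `f : ℂ → ℂ` there is a
sequence of polynomials in `z` converging to `f` μ-almost everywhere. -/
theorem stmt_9 (μ : Measure ℂ) [SigmaFinite μ] (f : ℂ → ℂ) (hf : Measurable f) :
    ∃ P : ℕ → Polynomial ℂ,
      ∀ᵐ z ∂μ, Tendsto (fun n => Polynomial.eval z (P n)) atTop (nhds (f z)) := by
  let d : ℂ → NNReal := fun z => (1 + ‖f z‖₊)⁻¹
  have hd : Measurable d := by fun_prop
  let ν := μ.toFinite.withDensity fun z => (d z : ENNReal)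
  have hd1 : ∀ z, d z ≤ 1 := fun z => inv_le_one_of_one_le₀ (by simp)
  have hν : IsFiniteMeasure ν := by
    apply isFiniteMeasure_withDensity
    have h1 : ∫⁻ z, (d z : ENNReal) ∂μ.toFinite ≤ ∫⁻ z, 1 ∂μ.toFinite :=
      lintegral_mono fun z => ENNReal.coe_le_one_iff.2 (hd1 z)
    refine ne_top_of_le_ne_top ?_ h1
    rw [lintegral_one]
    exact measure_ne_top _ _
  have hi : Integrable f ν := by
    rw [integrable_withDensity_iff_integrable_smul hd]
    refine Integrable.of_bound (C := 1) (by fun_prop) (Eventually.of_forall fun z => ?_)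
    rw [NNReal.smul_def, norm_smul]
    simp only [d, NNReal.coe_inv, NNReal.coe_add, NNReal.coe_one, coe_nnnorm, norm_inv]
    have h0 := norm_nonneg (f z)
    rw [Real.norm_of_nonneg (by linarith), inv_mul_le_iff₀ (by linarith)]
    linarith
  obtain ⟨P, hP⟩ := aux_fin ν f hi
  refine ⟨P, ?_⟩
  have hac : μ ≪ ν := (absolutelyContinuous_toFinite μ).trans
    (withDensity_absolutelyContinuous' (by fun_prop)
      (Eventually.of_forall fun z => by simp only [d, ne_eq, ENNReal.coe_eq_zero]; positivity))
  exact hac.ae_le hP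
end
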